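/- arXiv:2312.09695 — 2 statements merged into one kernel-verified Lean document; each statement's English description precedes it below -/
import Mathlib

section
/- Let (X_n)_{n∈ℕ} be a supermartingale with respect to the filtration (ℱ_n), let T be a stopping time with E[T] < ∞ (so T < ∞ almost surely), and suppose there is a constant C > 0 such that |X_{n+1} − X_n| ≤ C almost surely for every n. Then the stopped value X_T is integrable and E[X_T] ≤ E[X_0]. Dually, if (X_n) is a submartingale satisfying the same hypotheses, then X_T is integrable and E[X_T] ≥ E[X_0]. -/
open MeasureTheory Filter

open scoped ENNReal

lemma osbd_sub
    {Ω : Type*} {m0 : MeasurableSpace Ω} {μ : Measure Ω} [IsProbabilityMeasure μ]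
    (ℱ : Filtration ℕ m0)
    (X : ℕ → Ω → ℝ)
    (T : Ω → ℕ∞)
    (hT : ∀ n : ℕ, MeasurableSet[ℱ n] {ω | T ω ≤ (n : ℕ∞)})
    (hTint : ∫⁻ ω, (T ω : ℝ≥0∞) ∂μ < ⊤)
    (C : ℝ) (hC : 0 < C)
    (hbdd : ∀ n : ℕ, ∀ᵐ ω ∂μ, |X (n + 1) ω - X n ω| ≤ C)
    (hX : Submartingale X ℱ μ) :
      Integrable (fun ω => X (T ω).toNat ω) μ ∧
        ∫ ω, X 0 ω ∂μ ≤ ∫ ω, X (T ω).toNat ω ∂μ := by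
  have hst : IsStoppingTime ℱ T := hT
  have hY := hX.stoppedProcess hst
  have hTm : Measurable (fun ω => (T ω : ℝ≥0∞)) := by
    let _ : MeasurableSpace ℕ∞ := ⊤
    have : Measurable T := by
      refine measurable_to_countable' fun x => ?_
      induction x using ENat.recTopCoe with
      | top =>
        have : T ⁻¹' {⊤} = (⋃ n : ℕ, {ω | T ω ≤ (n : ℕ∞)})ᶜ := by
          ext ω
          simp [ENat.eq_top_iff_forall_gt]
        rw [this]
        exact (MeasurableSet.iUnion fun n => ℱ.le n _ (hT n)).compl
      | coe n => exact ℱ.le n _ (hst.measurableSet_eq n)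
    exact (measurable_from_top (f := fun x : ℕ∞ => (x : ℝ≥0∞))).comp this
  have hfin : ∀ᵐ ω ∂μ, T ω ≠ ⊤ := by
    filter_upwards [ae_lt_top hTm hTint.ne] with ω h h'
    simp [h'] at h
  have hB := integrable_toReal_of_lintegral_ne_top hTm.aemeasurable hTint.ne
  have hb' := ae_all_iff.2 hbdd
  have hdom : ∀ n, ∀ᵐ ω ∂μ, norm (stoppedProcess X T n ω) ≤ |X 0 ω| + C * (T ω : ℝ≥0∞).toReal := by
    intro n
    filter_upwards [hfin, hb'] with ω h1 h2
    have key : ∀ k, |X k ω| ≤ |X 0 ω| + C * k := by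
      intro k
      induction k with
      | zero => simp
      | succ k ih =>
        have := abs_add_le (X (k+1) ω - X k ω) (X k ω)
        rw [sub_add_cancel] at this
        push_cast
        linarith [h2 k]
    lift T ω to ℕ using h1 with t ht
    have : stoppedProcess X T n ω = X (min n t) ω := by
      simp only [stoppedProcess, ← ht]
      rfl
    rw [this, Real.norm_eq_abs]
    refine (key _).trans ?_
    have : ((min n t : ℕ) : ℝ) ≤ t := by exact_mod_cast min_le_right _ _
    simp only [ENat.toENNReal_coe, ENNReal.toReal_natCast]
    gcongr
  have hlim : ∀ᵐ ω ∂μ, Tendsto (fun n => stoppedProcess X T n ω) atTop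
      (nhds (X (T ω).toNat ω)) := by
    filter_upwards [hfin] with ω h1
    refine tendsto_const_nhds.congr' ?_
    obtain ⟨t, ht⟩ := ENat.ne_top_iff_exists.1 h1
    filter_upwards [eventually_ge_atTop t] with n hn
    have : stoppedProcess X T n ω = X (min n t) ω := by
      simp only [stoppedProcess, ← ht]
      rfl
    rw [this, min_eq_right hn, ← ht]
    rfl
  have hBI : Integrable (fun ω => |X 0 ω| + C * (T ω : ℝ≥0∞).toReal) μ :=
    (hX.integrable 0).abs.add (hB.const_mul C)
  have hmeas : ∀ n, AEStronglyMeasurable (stoppedProcess X T n) μ :=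
    fun n => (hY.integrable n).aestronglyMeasurable
  constructor
  · refine hBI.mono' (aestronglyMeasurable_of_tendsto_ae _ hmeas hlim) ?_
    filter_upwards [hlim, ae_all_iff.2 hdom] with ω h1 h2
    exact le_of_tendsto h1.norm (Eventually.of_forall h2)
  · refine ge_of_tendsto (tendsto_integral_of_dominated_convergence _ hmeas hBI hdom hlim)
      (Eventually.of_forall fun n => ?_)
    have h := hY.setIntegral_le (Nat.zero_le n) MeasurableSet.univ
    simp only [setIntegral_univ] at h
    refine le_trans (le_of_eq ?_) h
    congr 1
    ext ω
    exact (stoppedProcess_eq_of_le (zero_le (a := T ω))).symm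

/-- Optional Stopping Theorem: for a stopping time `T` with finite expectation and a
process `X` with uniformly bounded differences `|X (n+1) - X n| ≤ C` a.s., if `X` is a
supermartingale then the stopped value `X_T` is integrable and `E[X_T] ≤ E[X_0]`;
dually, if `X` is a submartingale then `X_T` is integrable and `E[X_T] ≥ E[X_0]`. -/
theorem optional_stopping_bounded_differences
    {Ω : Type*} {m0 : MeasurableSpace Ω} {μ : Measure Ω} [IsProbabilityMeasure μ]
    (ℱ : Filtration ℕ m0)
    (X : ℕ → Ω → ℝ)
    (T : Ω → ℕ∞)
    (hT : ∀ n : ℕ, MeasurableSet[ℱ n] {ω | T ω ≤ (n : ℕ∞)})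
    (hTint : ∫⁻ ω, (T ω : ℝ≥0∞) ∂μ < ⊤)
    (C : ℝ) (hC : 0 < C)
    (hbdd : ∀ n : ℕ, ∀ᵐ ω ∂μ, |X (n + 1) ω - X n ω| ≤ C) :
    (Supermartingale X ℱ μ →
      Integrable (fun ω => X (T ω).toNat ω) μ ∧
        ∫ ω, X (T ω).toNat ω ∂μ ≤ ∫ ω, X 0 ω ∂μ) ∧
    (Submartingale X ℱ μ →
      Integrable (fun ω => X (T ω).toNat ω) μ ∧
        ∫ ω, X 0 ω ∂μ ≤ ∫ ω, X (T ω).toNat ω ∂μ) := by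
  refine ⟨fun h => ?_, osbd_sub ℱ X T hT hTint C hC hbdd⟩
  have := osbd_sub ℱ (-X) T hT hTint C hC (fun n => by
    filter_upwards [hbdd n] with ω hω
    rw [← abs_neg]
    convert hω using 2
    simp only [Pi.neg_apply]
    ring) h.neg
  simp only [Pi.neg_apply, integral_neg, neg_le_neg_iff] at this
  exact ⟨by simpa using this.1.neg, this.2⟩
end

section
/- Let (Y_n)_{n∈ℕ} be a supermartingale with respect to the filtration (ℱ_n) such that Y_0 is almost surely equal to a constant, and let ([a_n, b_n])_{n∈ℕ} be a sequence of nonempty real intervals with a_n < b_n and a_n ≤ Y_{n+1} − Y_n ≤ b_n almost surely for every n. Then for every n ≥ 1 and every λ > 0, P(Y_n − Y_0 ≥ λ) ≤ exp(−2λ² / Σ_{k=0}^{n−1} (b_k − a_k)²). Symmetrically, if (Y_n) is a submartingale satisfying the same difference bounds with constant Y_0, then P(Y_n − Y_0 ≤ −λ) ≤ exp(−2λ² / Σ_{k=0}^{n−1} (b_k − a_k)²). -/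
open MeasureTheory Filter

lemma hoeff_two_point (a b p q t : ℝ) (hab : a < b) (hp : 0 ≤ p) (hq : 0 ≤ q) (hpq : p + q = 1)
    (h0 : p * a + q * b = 0) :
    p * Real.exp (t * a) + q * Real.exp (t * b) ≤ Real.exp (t ^ 2 * (b - a) ^ 2 / 8) := by
  let ν : Measure ℝ := ENNReal.ofReal p • Measure.dirac a + ENNReal.ofReal q • Measure.dirac b
  have hν : IsProbabilityMeasure ν := ⟨by
    simp [ν, ← ENNReal.ofReal_add hp hq, hpq]⟩
  have hint : ∀ f : ℝ → ℝ, ∫ x, f x ∂ν = p * f a + q * f b := by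
    intro f
    have h1 : ∀ c : ℝ, ∀ r : ℝ, Integrable f (ENNReal.ofReal r • Measure.dirac c) := fun c r =>
      (integrable_dirac (by simp)).smul_measure (by simp)
    rw [integral_add_measure (h1 _ _) (h1 _ _), integral_smul_measure, integral_smul_measure]
    simp [ENNReal.toReal_ofReal hp, ENNReal.toReal_ofReal hq]
  have hmem : ∀ᵐ x ∂ν, (id x : ℝ) ∈ Set.Icc a b := by
    rw [ae_add_measure_iff]
    constructor
    · apply Measure.ae_smul_measure
      rw [ae_dirac_eq]; exact ⟨le_rfl, hab.le⟩
    · apply Measure.ae_smul_measure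
      rw [ae_dirac_eq]; exact ⟨hab.le, le_rfl⟩
  have h := (ProbabilityTheory.hasSubgaussianMGF_of_mem_Icc_of_integral_eq_zero
    (μ := ν) (X := id) aemeasurable_id hmem (by rw [hint]; exact h0)).mgf_le t
  rw [ProbabilityTheory.mgf, hint] at h
  refine h.trans (le_of_eq ?_)
  congr 1
  simp [div_pow]
  ring

lemma hoeff_chord (a b t : ℝ) (hab : a < b) (ha : a ≤ 0) (ht : 0 ≤ t) :
    ∃ A B : ℝ, 0 ≤ B ∧ A ≤ Real.exp (t ^ 2 * (b - a) ^ 2 / 8) ∧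
      ∀ x, a ≤ x → x ≤ b → Real.exp (t * x) ≤ A + B * x := by
  have hd : 0 < b - a := sub_pos.2 hab
  rcases lt_or_ge b 0 with hb | hb
  · refine ⟨1, 0, le_rfl, Real.one_le_exp (by positivity), fun x _ hx => ?_⟩
    rw [zero_mul, add_zero, Real.exp_le_one_iff]
    nlinarith
  · refine ⟨b / (b - a) * Real.exp (t * a) + (-a) / (b - a) * Real.exp (t * b),
      (Real.exp (t * b) - Real.exp (t * a)) / (b - a), ?_, ?_, ?_⟩
    · apply div_nonneg _ hd.le
      rw [sub_nonneg, Real.exp_le_exp]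
      nlinarith
    · apply hoeff_two_point _ _ _ _ _ hab (div_nonneg hb hd.le)
        (div_nonneg (by linarith) hd.le)
      · field_simp; ring
      · field_simp; ring
    · intro x hax hxb
      have h := convexOn_exp.2 (Set.mem_univ (t * a)) (Set.mem_univ (t * b))
        (show 0 ≤ (b - x) / (b - a) from div_nonneg (by linarith) hd.le)
        (show 0 ≤ (x - a) / (b - a) from div_nonneg (by linarith) hd.le)
        (by field_simp; ring)
      simp only [smul_eq_mul] at h
      have e1 : (b - x) / (b - a) * (t * a) + (x - a) / (b - a) * (t * b) = t * x := by
        field_simp; ring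
      rw [e1] at h
      refine h.trans (le_of_eq ?_)
      field_simp; ring

lemma hoeff_step {Ω : Type*} (m : MeasurableSpace Ω) {m0 : MeasurableSpace Ω} {μ : Measure Ω} [IsProbabilityMeasure μ]
    (hm : m ≤ m0) (Z D : Ω → ℝ) (hZ : StronglyMeasurable[m] Z)
    (hZ0 : ∀ ω, 0 ≤ Z ω) (C : ℝ) (hZC : ∀ᵐ ω ∂μ, Z ω ≤ C) (hD : Integrable D μ)
    (hDc : μ[D | m] ≤ᵐ[μ] 0) (a b t : ℝ) (hab : a < b) (ht : 0 ≤ t)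
    (hbd : ∀ᵐ ω ∂μ, a ≤ D ω ∧ D ω ≤ b) :
    Integrable (fun ω => Z ω * Real.exp (t * D ω)) μ ∧
    ∫ ω, Z ω * Real.exp (t * D ω) ∂μ ≤ Real.exp (t ^ 2 * (b - a) ^ 2 / 8) * ∫ ω, Z ω ∂μ := by
  have hZn : ∀ᵐ ω ∂μ, ‖Z ω‖ ≤ C := by
    filter_upwards [hZC] with ω h
    rwa [Real.norm_of_nonneg (hZ0 ω)]
  have hZs : AEStronglyMeasurable Z μ := (hZ.mono hm).aestronglyMeasurable
  have hZi : Integrable Z μ := Integrable.of_bound hZs C hZn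
  have hZD : Integrable (Z * D) μ := hD.bdd_mul hZs hZn
  have ha : a ≤ 0 := by
    have h1 : ∫ ω, D ω ∂μ ≤ 0 := by
      rw [← integral_condExp hm]
      exact integral_nonpos_of_ae hDc
    have h2 : ∫ _, a ∂μ ≤ ∫ ω, D ω ∂μ :=
      integral_mono_ae (integrable_const _) hD (hbd.mono fun _ h => h.1)
    simp at h2
    linarith
  have hneg : ∫ ω, Z ω * D ω ∂μ ≤ 0 := by
    have : ∫ ω, (Z * D) ω ∂μ ≤ 0 := by
      rw [← integral_condExp hm]
      apply integral_nonpos_of_ae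
      filter_upwards [condExp_mul_of_stronglyMeasurable_left hZ hZD hD, hDc] with ω h1 h2
      rw [h1]
      exact mul_nonpos_of_nonneg_of_nonpos (hZ0 ω) h2
    exact this
  obtain ⟨A, B, hB, hA, hx⟩ := hoeff_chord a b t hab ha ht
  have hI : Integrable (fun ω => Z ω * Real.exp (t * D ω)) μ := by
    apply Integrable.bdd_mul _ hZs hZn
    exact ProbabilityTheory.integrable_exp_mul_of_mem_Icc hD.aemeasurable hbd
  refine ⟨hI, ?_⟩
  calc ∫ ω, Z ω * Real.exp (t * D ω) ∂μ ≤ ∫ ω, (A * Z ω + B * (Z ω * D ω)) ∂μ := by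
        apply integral_mono_ae hI ((hZi.const_mul A).add (hZD.const_mul B))
        filter_upwards [hbd] with ω h
        have := mul_le_mul_of_nonneg_left (hx _ h.1 h.2) (hZ0 ω)
        show Z ω * Real.exp (t * D ω) ≤ A * Z ω + B * (Z ω * D ω)
        linarith
    _ = A * ∫ ω, Z ω ∂μ + B * ∫ ω, Z ω * D ω ∂μ := by
        have hZD2 : Integrable (fun ω => Z ω * D ω) μ := hZD
        rw [integral_add (hZi.const_mul A) (hZD2.const_mul B), integral_const_mul,
          integral_const_mul]
    _ ≤ A * ∫ ω, Z ω ∂μ := by nlinarith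
    _ ≤ _ := mul_le_mul_of_nonneg_right hA (integral_nonneg hZ0)

lemma hoeff_super {Ω : Type*} {m0 : MeasurableSpace Ω} {μ : Measure Ω} [IsProbabilityMeasure μ]
    (ℱ : Filtration ℕ m0) (Y : ℕ → Ω → ℝ) (a b : ℕ → ℝ) (hab : ∀ n, a n < b n)
    (hbdd : ∀ n : ℕ, ∀ᵐ ω ∂μ,
      a n ≤ Y (n + 1) ω - Y n ω ∧ Y (n + 1) ω - Y n ω ≤ b n)
    (hY : Supermartingale Y ℱ μ) (n : ℕ) (hn : 1 ≤ n) (lam : ℝ) (hlam : 0 < lam) :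
    (μ {ω | lam ≤ Y n ω - Y 0 ω}).toReal
      ≤ Real.exp (-2 * lam ^ 2 / ∑ k ∈ Finset.range n, (b k - a k) ^ 2) := by
  have hub : ∀ n : ℕ, ∀ᵐ ω ∂μ, Y n ω - Y 0 ω ≤ ∑ k ∈ Finset.range n, b k := by
    intro n
    induction n with
    | zero => simp
    | succ n ih =>
      filter_upwards [ih, hbdd n] with ω h1 h2
      rw [Finset.sum_range_succ]
      linarith [h2.2]
  have key : ∀ t : ℝ, 0 ≤ t → ∀ n : ℕ,
      Integrable (fun ω => Real.exp (t * (Y n ω - Y 0 ω))) μ ∧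
      ∫ ω, Real.exp (t * (Y n ω - Y 0 ω)) ∂μ ≤
        Real.exp (t ^ 2 * (∑ k ∈ Finset.range n, (b k - a k) ^ 2) / 8) := by
    intro t ht n
    induction n with
    | zero => simp
    | succ n ih =>
      have hZ : StronglyMeasurable[ℱ n] (fun ω => Real.exp (t * (Y n ω - Y 0 ω))) :=
        Real.continuous_exp.comp_stronglyMeasurable
          (((hY.1 n).sub ((hY.1 0).mono (ℱ.mono (Nat.zero_le n)))).const_mul t)
      have hDc : μ[Y (n + 1) - Y n | ℱ n] ≤ᵐ[μ] 0 := by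
        have h3 := condExp_of_stronglyMeasurable (ℱ.le n) (hY.1 n) (hY.2.2 n)
        filter_upwards [condExp_sub (hY.2.2 (n + 1)) (hY.2.2 n) (ℱ n),
          hY.2.1 n (n + 1) (Nat.le_succ n)] with ω h1 h2
        rw [h1, Pi.sub_apply, h3]
        simpa using h2
      obtain ⟨h1, h2⟩ := hoeff_step (ℱ n) (ℱ.le n) _ _ hZ (fun ω => (Real.exp_pos _).le)
        (Real.exp (t * ∑ k ∈ Finset.range n, b k))
        (by
          filter_upwards [hub n] with ω h
          exact Real.exp_le_exp.2 (mul_le_mul_of_nonneg_left h ht))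
        ((hY.2.2 (n + 1)).sub (hY.2.2 n)) hDc (a n) (b n) t (hab n) ht (hbdd n)
      have e : (fun ω => Real.exp (t * (Y n ω - Y 0 ω)) *
          Real.exp (t * (Y (n + 1) - Y n) ω)) =
          fun ω => Real.exp (t * (Y (n + 1) ω - Y 0 ω)) := by
        funext ω
        rw [← Real.exp_add, Pi.sub_apply]
        congr 1
        ring
      rw [e] at h1 h2
      refine ⟨h1, h2.trans ?_⟩
      refine (mul_le_mul_of_nonneg_left ih.2 (Real.exp_pos _).le).trans (le_of_eq ?_)
      rw [← Real.exp_add, Finset.sum_range_succ]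
      congr 1
      ring
  set S := ∑ k ∈ Finset.range n, (b k - a k) ^ 2 with hS
  have hSpos : 0 < S := by
    apply Finset.sum_pos
    · intro k _
      have := sub_pos.2 (hab k)
      positivity
    · exact ⟨0, Finset.mem_range.2 hn⟩
  have ht : 0 ≤ 4 * lam / S := by positivity
  obtain ⟨h1, h2⟩ := key _ ht n
  have h3 := ProbabilityTheory.measure_ge_le_exp_mul_mgf (μ := μ)
    (X := fun ω => Y n ω - Y 0 ω) lam ht h1
  refine h3.trans ((mul_le_mul_of_nonneg_left h2 (Real.exp_pos _).le).trans (le_of_eq ?_))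
  rw [← Real.exp_add, ← hS]
  congr 1
  field_simp
  ring

/-- Hoeffding's (Azuma's) inequality on martingales: if `Y` is a supermartingale with
`Y 0` a.s. equal to a constant and increments `Y (n+1) - Y n ∈ [a n, b n]` a.s. (with
`a n < b n`), then for every `n ≥ 1` and `λ > 0`,
`P(Y n - Y 0 ≥ λ) ≤ exp(-2λ² / ∑_{k<n} (b k - a k)²)`; symmetrically, if `Y` is a
submartingale with the same hypotheses, then
`P(Y n - Y 0 ≤ -λ) ≤ exp(-2λ² / ∑_{k<n} (b k - a k)²)`. -/
theorem hoeffding_inequality_on_martingales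
    {Ω : Type*} {m0 : MeasurableSpace Ω} {μ : Measure Ω} [IsProbabilityMeasure μ]
    (ℱ : Filtration ℕ m0)
    (Y : ℕ → Ω → ℝ)
    (y₀ : ℝ) (hY0 : Y 0 =ᵐ[μ] fun _ => y₀)
    (a b : ℕ → ℝ) (hab : ∀ n, a n < b n)
    (hbdd : ∀ n : ℕ, ∀ᵐ ω ∂μ,
      a n ≤ Y (n + 1) ω - Y n ω ∧ Y (n + 1) ω - Y n ω ≤ b n) :
    (Supermartingale Y ℱ μ →
      ∀ n : ℕ, 1 ≤ n → ∀ lam : ℝ, 0 < lam →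
        (μ {ω | lam ≤ Y n ω - Y 0 ω}).toReal
          ≤ Real.exp (-2 * lam ^ 2 / ∑ k ∈ Finset.range n, (b k - a k) ^ 2)) ∧
    (Submartingale Y ℱ μ →
      ∀ n : ℕ, 1 ≤ n → ∀ lam : ℝ, 0 < lam →
        (μ {ω | Y n ω - Y 0 ω ≤ -lam}).toReal
          ≤ Real.exp (-2 * lam ^ 2 / ∑ k ∈ Finset.range n, (b k - a k) ^ 2)) := by
  refine ⟨fun h n hn lam hlam => hoeff_super ℱ Y a b hab hbdd h n hn lam hlam,
    fun h n hn lam hlam => ?_⟩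
  have h1 := hoeff_super ℱ (-Y) (fun k => -b k) (fun k => -a k)
    (fun k => neg_lt_neg (hab k))
    (fun k => by
      filter_upwards [hbdd k] with ω hω
      simp only [Pi.neg_apply]
      constructor <;> linarith [hω.1, hω.2]) h.neg n hn lam hlam
  have e1 : {ω | lam ≤ (-Y) n ω - (-Y) 0 ω} = {ω | Y n ω - Y 0 ω ≤ -lam} := by
    ext ω
    simp only [Pi.neg_apply, Set.mem_setOf_eq]
    constructor <;> intro h <;> linarith
  have e2 : ∀ k, (-a k - -b k) ^ 2 = (b k - a k) ^ 2 := fun k => by ring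
  simp only [e1, e2] at h1
  exact h1
end
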